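/- There exists $\varepsilon > 0$ such that, writing $\mathcal{C}_n(\varepsilon)$ for the set of partitions in $\mathcal{P}_n$ whose cut score is at most $\varepsilon n^2$, we have $\lim_{n\to\infty} |\mathcal{C}_n(\varepsilon)|/|\mathcal{P}_n| = 0$. -/

import Mathlib

open Filter

/-- The `n × n` grid graph: vertices are pairs in `Fin n × Fin n`, adjacent iff they agree
in one coordinate and differ by exactly 1 in the other. -/
def gridGraph (n : ℕ) : SimpleGraph (Fin n × Fin n) :=
  SimpleGraph.fromRel (fun a b =>
    (a.1 = b.1 ∧ (a.2 : ℕ) + 1 = (b.2 : ℕ)) ∨ (a.2 = b.2 ∧ (a.1 : ℕ) + 1 = (b.1 : ℕ)))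

/-- `P` is a partition of the vertex set of the `n × n` grid graph into `n` parts,
each of size `n` and each inducing a connected subgraph. -/
def IsGridPartition (n : ℕ) (P : Finset (Finset (Fin n × Fin n))) : Prop :=
  P.card = n ∧
  (∀ s ∈ P, s.card = n) ∧
  (∀ s ∈ P, ((gridGraph n).induce (↑s : Set (Fin n × Fin n))).Connected) ∧
  (∀ v : Fin n × Fin n, ∃! s, s ∈ P ∧ v ∈ s)

/-- The number of partitions of the `n × n` grid graph into `n` connected parts of size `n`. -/
noncomputable def gridPartitionCount (n : ℕ) : ℕ :=
  Nat.card {P : Finset (Finset (Fin n × Fin n)) // IsGridPartition n P}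

/-- The cut score of a partition: the number of edges of the grid graph whose two endpoints
lie in different parts. -/
noncomputable def cutScore (n : ℕ) (P : Finset (Finset (Fin n × Fin n))) : ℕ :=
  {e ∈ (gridGraph n).edgeSet | ¬ ∃ s ∈ P, ∀ v ∈ e, v ∈ s}.ncard

/-!
A partition into connected parts is determined by its set of cut edges. The grid has at most `2 n²`
edges, so the partitions with cut score at most `ε n²` are no more numerous than the subsets of size
at most `ε n²` of a set of size `2 n²`; their number is at most `(1 + x) ^ (2 n²) / x ^ (ε n²)` for
every `0 < x ≤ 1`, hence `exp (δ n²)` with `δ` as small as we like when `ε` is small.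

On the other hand there are at least `2 ^ ⌊n / 3⌋²` partitions. Cut the grid into strips of three
columns, and let the upper two thirds of each middle column be the interleaved teeth of two combs
whose spines are the outer columns: each of the `⌊n / 3⌋` pairs of consecutive teeth can be swapped
independently.
-/

section ConnectedPartition

variable {V : Type*} {G : SimpleGraph V} {P Q : Finset (Finset V)}

/-- A partition of the vertices of `G`, given as a family of finite sets, all of whose parts induce
connected subgraphs; unlike `IsGridPartition`, the sizes of the parts are unconstrained. -/
structure IsConnectedPartition (G : SimpleGraph V) (P : Finset (Finset V)) : Prop where
  connected : ∀ s ∈ P, (G.induce (s : Set V)).Connected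
  existsUnique_mem : ∀ v, ∃! s, s ∈ P ∧ v ∈ s

/-- The edges of `G` that are not contained in a single part of `P`, so that the cut score is the
number of cut edges. -/
def cutEdges (G : SimpleGraph V) (P : Finset (Finset V)) : Set (Sym2 V) :=
  {e ∈ G.edgeSet | ¬ ∃ s ∈ P, ∀ v ∈ e, v ∈ s}

lemma exists_superset_of_cutEdges_subset (hP : IsConnectedPartition G P)
    (hQ : IsConnectedPartition G Q) (h : cutEdges G Q ⊆ cutEdges G P) {s : Finset V} (hs : s ∈ P) :
    ∃ t ∈ Q, s ⊆ t := by
  have hconn := hP.connected s hs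
  obtain ⟨v⟩ := hconn.nonempty
  obtain ⟨t, ⟨ht, hvt⟩, -⟩ := hQ.existsUnique_mem v
  refine ⟨t, ht, fun w hw => ?_⟩
  have mem_of_adj (a b : s) (hab : G.Adj a b) (ha : (a : V) ∈ t) : (b : V) ∈ t := by
    have not_cut : s((a : V), (b : V)) ∉ cutEdges G P := fun hcut =>
      hcut.2 ⟨s, hs, by simp⟩
    obtain ⟨t', ht', hmem⟩ : ∃ t' ∈ Q, ∀ v ∈ s((a : V), (b : V)), v ∈ t' := by
      by_contra hcut
      exact not_cut (h ⟨hab, hcut⟩)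
    obtain rfl : t' = t :=
      (hQ.existsUnique_mem a).unique ⟨ht', hmem a (Sym2.mem_mk_left _ _)⟩ ⟨ht, ha⟩
    exact hmem b (Sym2.mem_mk_right _ _)
  have mem_of_walk {a b : (s : Set V)} (p : (G.induce (s : Set V)).Walk a b) :
      (a : V) ∈ t → (b : V) ∈ t := by
    induction p with
    | nil => exact id
    | cons hab _ ih => exact fun ha => ih (mem_of_adj _ _ hab ha)
  obtain ⟨p⟩ := hconn.preconnected v ⟨w, hw⟩
  exact mem_of_walk p hvt

lemma subset_of_cutEdges_eq (hP : IsConnectedPartition G P) (hQ : IsConnectedPartition G Q)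
    (h : cutEdges G P = cutEdges G Q) : P ⊆ Q := by
  intro s hs
  obtain ⟨t, ht, hst⟩ := exists_superset_of_cutEdges_subset hP hQ h.ge hs
  obtain ⟨s', hs', hts'⟩ := exists_superset_of_cutEdges_subset hQ hP h.le ht
  obtain ⟨v, hv⟩ := (hP.connected s hs).nonempty
  obtain rfl : s = s' :=
    (hP.existsUnique_mem v).unique ⟨hs, hv⟩ ⟨hs', hts' (hst hv)⟩
  rwa [hst.antisymm hts']

lemma injOn_cutEdges : Set.InjOn (cutEdges G) {P | IsConnectedPartition G P} := fun _ hP _ hQ h =>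
  (subset_of_cutEdges_eq hP hQ h).antisymm (subset_of_cutEdges_eq hQ hP h.symm)

end ConnectedPartition

section Counting

lemma card_small_subsets_mul_pow_le {α R : Type*} [CommRing R] [LinearOrder R]
    [IsStrictOrderedRing R] (E : Finset α) (k : ℕ) {x : R} (hx₀ : 0 ≤ x) (hx₁ : x ≤ 1) :
    (({A ∈ E.powerset | A.card ≤ k} : Finset (Finset α)).card : R) * x ^ k ≤
      (1 + x) ^ E.card := by
  calc _ = ∑ A ∈ E.powerset with A.card ≤ k, x ^ k := by
        rw [Finset.sum_const, nsmul_eq_mul]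
    _ ≤ ∑ A ∈ E.powerset with A.card ≤ k, x ^ A.card :=
        Finset.sum_le_sum fun A hA =>
          pow_le_pow_of_le_one hx₀ hx₁ (Finset.mem_filter.mp hA).2
    _ ≤ ∑ A ∈ E.powerset, x ^ A.card :=
        Finset.sum_le_sum_of_subset_of_nonneg (Finset.filter_subset _ _)
          fun A _ _ => pow_nonneg hx₀ _
    _ = (1 + x) ^ E.card := by
        simpa [add_comm] using Finset.sum_pow_mul_eq_add_pow x 1 E

lemma card_connectedPartition_mul_pow_le {V R : Type*} [Finite V] [CommRing R] [LinearOrder R]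
    [IsStrictOrderedRing R] (G : SimpleGraph V) (k : ℕ) {x : R} (hx₀ : 0 ≤ x) (hx₁ : x ≤ 1) :
    (Nat.card {P // IsConnectedPartition G P ∧ (cutEdges G P).ncard ≤ k} : R) * x ^ k ≤
      (1 + x) ^ G.edgeSet.ncard := by
  classical
  have := Fintype.ofFinite V
  let smallSets := {A ∈ G.edgeSet.toFinset.powerset | A.card ≤ k}
  let cut (P : {P // IsConnectedPartition G P ∧ (cutEdges G P).ncard ≤ k}) : smallSets :=
    ⟨(cutEdges G P).toFinset, by
      simp only [smallSets, Finset.mem_filter, Finset.mem_powerset, Set.toFinset_subset_toFinset,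
        ← Set.ncard_eq_toFinset_card']
      exact ⟨fun e he => he.1, P.2.2⟩⟩
  have cut_injective : cut.Injective := fun P Q h => Subtype.ext <|
    injOn_cutEdges P.2.1 Q.2.1 (Set.toFinset_inj.mp (congrArg Subtype.val h))
  have card_le := Nat.card_le_card_of_injective cut cut_injective
  calc _ ≤ (smallSets.card : R) * x ^ k := by
        gcongr
        simpa using card_le
    _ ≤ (1 + x) ^ G.edgeSet.ncard := by
        rw [Set.ncard_eq_toFinset_card']
        exact card_small_subsets_mul_pow_le _ k hx₀ hx₁

lemma ncard_edgeSet_fromRel_le {V : Type*} [Finite V] (r : V → V → Prop) :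
    (SimpleGraph.fromRel r).edgeSet.ncard ≤ {p : V × V | r p.1 p.2}.ncard := by
  have subset_image :
      (SimpleGraph.fromRel r).edgeSet ⊆ (fun p => s(p.1, p.2)) '' {p : V × V | r p.1 p.2} := by
    intro e
    induction e with | _ a b
    rintro ⟨-, hab | hba⟩
    · exact ⟨(a, b), hab, rfl⟩
    · exact ⟨(b, a), hba, Sym2.eq_swap⟩
  exact (Set.ncard_le_ncard subset_image).trans Set.ncard_image_le

lemma ncard_graph_le_of_rightUnique {α β : Type*} [Finite α] {r : α → β → Prop}
    (hr : Relator.RightUnique r) : {p : α × β | r p.1 p.2}.ncard ≤ Nat.card α := by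
  rw [← Set.ncard_univ]
  refine Set.ncard_le_ncard_of_injOn Prod.fst (fun _ _ => Set.mem_univ _) ?_
  rintro ⟨a, b⟩ hab ⟨_, b'⟩ hab' rfl
  exact Prod.ext rfl (hr hab hab')

lemma card_fiber_of_injective_prodMk {α β γ : Type*} [Fintype α] [Fintype β] [Fintype γ]
    [DecidableEq β] {f : α → β} {g : α → γ}
    (hfg : Function.Injective fun v => (f v, g v))
    (hcard : Fintype.card α = Fintype.card β * Fintype.card γ) (l : β) :
    ({v | f v = l} : Finset α).card = Fintype.card γ := by
  have hbij := (Fintype.bijective_iff_injective_and_card _).mpr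
    ⟨hfg, hcard.trans (Fintype.card_prod β γ).symm⟩
  refine Finset.card_bij (t := Finset.univ) (fun v _ => g v) (by simp) ?_ ?_
  · intro v hv w hw h
    simp only [Finset.mem_filter, Finset.mem_univ, true_and] at hv hw
    exact hfg (Prod.ext (hv.trans hw.symm) h)
  · intro k _
    obtain ⟨v, hv⟩ := hbij.surjective (l, k)
    exact ⟨v, by simpa using congrArg Prod.fst hv, congrArg Prod.snd hv⟩

end Counting

section Fibers

variable {α β : Type*} [Fintype α] [DecidableEq α] [Fintype β] [DecidableEq β]

/-- The fibres of a labelling `f`, as a family of finite sets; it is a partition of `α`, with the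
empty set as an additional member when `f` is not surjective. -/
def fiberFamily (f : α → β) : Finset (Finset α) :=
  Finset.univ.image fun l => Finset.univ.filter fun v => f v = l

lemma mem_fiberFamily {f : α → β} {s : Finset α} :
    s ∈ fiberFamily f ↔ ∃ l, ({v | f v = l} : Finset α) = s := by
  simp [fiberFamily]

lemma exists_mem_fiberFamily_iff {f : α → β} {v w : α} :
    (∃ s ∈ fiberFamily f, v ∈ s ∧ w ∈ s) ↔ f v = f w := by
  simp [fiberFamily, eq_comm]

lemma existsUnique_mem_fiberFamily (f : α → β) (v : α) : ∃! s, s ∈ fiberFamily f ∧ v ∈ s := by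
  refine ⟨({u | f u = f v} : Finset α), ⟨mem_fiberFamily.mpr ⟨_, rfl⟩, by simp⟩, ?_⟩
  rintro s ⟨hs, hv⟩
  obtain ⟨l, rfl⟩ := mem_fiberFamily.mp hs
  obtain rfl : f v = l := by simpa using hv
  rfl

lemma card_fiberFamily {f : α → β} (hf : f.Surjective) :
    (fiberFamily f).card = Fintype.card β := by
  refine Finset.card_image_of_injective _ fun l l' h => ?_
  obtain ⟨v, rfl⟩ := hf l
  exact (Finset.mem_filter.mp (h.le (Finset.mem_filter.mpr ⟨Finset.mem_univ v, rfl⟩))).2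

end Fibers

lemma induce_connected_of_dominating {V : Type*} {G : SimpleGraph V} {B s : Set V} (hBs : B ⊆ s)
    (hB : (G.induce B).Connected) (hdom : ∀ v ∈ s, v ∉ B → ∃ w ∈ B, G.Adj v w) :
    (G.induce s).Connected := by
  obtain ⟨u, hu⟩ := hB.nonempty
  refine G.induce_connected_of_patches u (hBs hu) fun {v} hv => ?_
  by_cases hvB : v ∈ B
  · exact ⟨B, hBs, hu, hvB, hB.preconnected _ _⟩
  · obtain ⟨w, hw, hvw⟩ := hdom v hv hvB
    have hconn : (G.induce (B ∪ {v, w})).Connected :=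
      SimpleGraph.induce_union_connected hB.preconnected
        (SimpleGraph.induce_pair_connected_of_adj hvw).preconnected
        ⟨w, hw, by simp⟩
    exact ⟨B ∪ {v, w}, Set.union_subset hBs (by simp [Set.insert_subset_iff, hv, hBs hw]),
      Or.inl hu, Or.inr (by simp), hconn.preconnected _ _⟩

section Grid

variable {n : ℕ}

lemma IsGridPartition.isConnectedPartition {P : Finset (Finset (Fin n × Fin n))}
    (hP : IsGridPartition n P) : IsConnectedPartition (gridGraph n) P :=
  ⟨hP.2.2.1, hP.2.2.2⟩

lemma ncard_edgeSet_gridGraph_le (n : ℕ) : (gridGraph n).edgeSet.ncard ≤ 2 * n ^ 2 := by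
  have horizontal : Relator.RightUnique fun a b : Fin n × Fin n =>
      a.1 = b.1 ∧ (a.2 : ℕ) + 1 = b.2 := fun a b b' h h' => by
    simp only [Prod.ext_iff, Fin.ext_iff] at h h' ⊢
    omega
  have vertical : Relator.RightUnique fun a b : Fin n × Fin n =>
      a.2 = b.2 ∧ (a.1 : ℕ) + 1 = b.1 := fun a b b' h h' => by
    simp only [Prod.ext_iff, Fin.ext_iff] at h h' ⊢
    omega
  calc (gridGraph n).edgeSet.ncard
    _ ≤ _ := (ncard_edgeSet_fromRel_le _).trans (Set.ncard_union_le _ _)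
    _ ≤ Nat.card (Fin n × Fin n) + Nat.card (Fin n × Fin n) :=
        add_le_add (ncard_graph_le_of_rightUnique horizontal)
          (ncard_graph_le_of_rightUnique vertical)
    _ = 2 * n ^ 2 := by
        simp only [Nat.card_prod, Nat.card_fin]
        ring

lemma gridGraph_adj_iff {a b : Fin n × Fin n} : (gridGraph n).Adj a b ↔
    (a.1 = b.1 ∧ ((a.2 : ℕ) + 1 = b.2 ∨ (b.2 : ℕ) + 1 = a.2)) ∨
      (a.2 = b.2 ∧ ((a.1 : ℕ) + 1 = b.1 ∨ (b.1 : ℕ) + 1 = a.1)) := by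
  simp only [gridGraph, SimpleGraph.fromRel_adj, ne_eq, Prod.ext_iff, Fin.ext_iff]
  omega

lemma gridGraph_induce_column_connected {I : Set (Fin n)} [I.OrdConnected] (hI : I.Nonempty)
    (c : Fin n) : ((gridGraph n).induce (I ×ˢ {c})).Connected := by
  have := hI.to_subtype
  let toColumn : SimpleGraph.hasse I →g (gridGraph n).induce (I ×ˢ {c}) :=
    { toFun := fun r => ⟨(r, c), r.2, rfl⟩
      map_rel' := fun {a b} hab => by
        have covBy_iff (a b : I) : (a : Fin n) ⋖ b ↔ a ⋖ b :=
          Set.OrdConnected.apply_covBy_apply_iff (OrderEmbedding.subtype (· ∈ I)) (by simpa)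
        simp only [SimpleGraph.hasse_adj, ← covBy_iff, Fin.covBy_iff,
          Nat.covBy_iff_add_one_eq] at hab
        exact gridGraph_adj_iff.mpr (Or.inr ⟨rfl, hab⟩) }
  have toColumn_surjective : Function.Surjective toColumn := by
    rintro ⟨⟨r, _⟩, hr, rfl⟩
    exact ⟨⟨r, hr⟩, rfl⟩
  have hasse_connected : (SimpleGraph.hasse I).Connected :=
    ⟨SimpleGraph.hasse_preconnected_of_succ I⟩
  exact hasse_connected.map toColumn toColumn_surjective

/-- The comb partition encoded by `S`: the column containing the spine of the part through the cell
`(r, c)`. Let `m = n / 3`. For `j < m`, the first `n - m` cells of columns `3j` and `3j + 2` are the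
spines of two combs. For `i < m`, the cells of column `3j + 1` in rows `2i` and `2i + 1` are teeth,
one for each of the two combs, and membership of `(i, j)` in `S` decides which way round. The
remaining `n` cells of the three columns form one part with spine in column `3j + 1`, and each of
the last `n % 3` columns is a part of its own. -/
def combLabel (n : ℕ) (S : Finset (ℕ × ℕ)) (r c : ℕ) : ℕ :=
  if 3 * (n / 3) ≤ c then c
  else if c % 3 = 1 then
    if r < 2 * (n / 3) then (if r % 2 = 0 ↔ (r / 2, c / 3) ∈ S then c - 1 else c + 1) else c
  else if r < n - n / 3 then c
  else c / 3 * 3 + 1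

/-- A number below `n` that tells apart the cells `(r, c)` with the same `combLabel`: the row of a
spine cell, and one of the rows missing from the spine for any other cell. -/
def combSlot (n r c : ℕ) : ℕ :=
  if 3 * (n / 3) ≤ c then r
  else if c % 3 = 1 then
    if r < 2 * (n / 3) then n - n / 3 + r / 2 else r
  else if r < n - n / 3 then r
  else if c % 3 = 0 then r - (n - n / 3)
  else r - (n - 2 * (n / 3))

variable {S : Finset (ℕ × ℕ)} {r c : ℕ}

lemma combLabel_lt (hc : c < n) : combLabel n S r c < n := by
  unfold combLabel
  split_ifs <;> omega

lemma combSlot_lt (hr : r < n) : combSlot n r c < n := by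
  unfold combSlot
  split_ifs <;> omega

lemma combLabel_eq_or_adjacent :
    combLabel n S r c = c ∨ combLabel n S r c + 1 = c ∨ c + 1 = combLabel n S r c := by
  unfold combLabel
  split_ifs <;> omega

lemma combLabel_combLabel (n : ℕ) (S : Finset (ℕ × ℕ)) (r c : ℕ) :
    combLabel n S r (combLabel n S r c) = combLabel n S r c := by
  unfold combLabel
  grind

lemma combLabel_eq_self_of_mem_Icc {r₁ r₂ : ℕ} (h₁ : combLabel n S r₁ c = c)
    (h₂ : combLabel n S r₂ c = c) (hr : r ∈ Set.Icc r₁ r₂) : combLabel n S r c = c := by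
  obtain ⟨_, _⟩ := hr
  unfold combLabel at *
  grind

lemma eq_of_combLabel_eq_of_combSlot_eq {r' c' : ℕ} (hr : r < n) (hr' : r' < n)
    (hlabel : combLabel n S r c = combLabel n S r' c') (hslot : combSlot n r c = combSlot n r' c') :
    r = r' ∧ c = c' := by
  have same_column : c = c' ∧ (r = r' ∨
      r / 2 = r' / 2 ∧ c < 3 * (n / 3) ∧ c % 3 = 1 ∧ r < 2 * (n / 3) ∧ r' < 2 * (n / 3)) := by
    unfold combLabel at hlabel
    unfold combSlot at hslot
    split_ifs at hlabel hslot <;> omega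
  obtain ⟨rfl, rfl | ⟨same_row_pair, _⟩⟩ := same_column
  · exact ⟨rfl, rfl⟩
  · unfold combLabel at hlabel
    rw [same_row_pair] at hlabel
    grind

/-- The comb partition encoded by `S`, as a labelling of the cells by the columns of the spines. -/
def combLabelling (n : ℕ) (S : Finset (ℕ × ℕ)) (v : Fin n × Fin n) : Fin n :=
  ⟨combLabel n S v.1 v.2, combLabel_lt v.2.isLt⟩

lemma card_combLabelling_fiber (S : Finset (ℕ × ℕ)) (l : Fin n) :
    ({v | combLabelling n S v = l} : Finset _).card = n := by
  let slot (v : Fin n × Fin n) : Fin n := ⟨combSlot n v.1 v.2, combSlot_lt v.1.isLt⟩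
  have label_slot_injective : Function.Injective fun v => (combLabelling n S v, slot v) := by
    intro v w h
    simp only [combLabelling, slot, Prod.ext_iff, Fin.ext_iff] at h ⊢
    exact eq_of_combLabel_eq_of_combSlot_eq v.1.isLt w.1.isLt h.1 h.2
  simpa using card_fiber_of_injective_prodMk label_slot_injective (by simp) l

lemma combLabelling_surjective (S : Finset (ℕ × ℕ)) : (combLabelling n S).Surjective := by
  intro l
  have fiber_nonempty : ({v | combLabelling n S v = l} : Finset _).Nonempty := by
    rw [← Finset.card_pos, card_combLabelling_fiber]
    exact l.pos
  simpa [Finset.filter_nonempty_iff] using fiber_nonempty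

lemma combLabelling_fiber_connected (S : Finset (ℕ × ℕ)) (l : Fin n) :
    ((gridGraph n).induce {v | combLabelling n S v = l}).Connected := by
  let spine : Set (Fin n) := {r | combLabelling n S (r, l) = l}
  have mem_spine {v} (hv : combLabelling n S v = l) : v.1 ∈ spine := by
    obtain rfl := hv
    exact Fin.ext (combLabel_combLabel n S v.1 v.2)
  have spine_ordConnected : spine.OrdConnected := ⟨fun _ h₁ _ h₂ _ hr =>
    Fin.ext (combLabel_eq_self_of_mem_Icc (congrArg Fin.val h₁) (congrArg Fin.val h₂) hr)⟩
  have spine_nonempty : spine.Nonempty := by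
    obtain ⟨v, hv⟩ := combLabelling_surjective S l
    exact ⟨v.1, mem_spine hv⟩
  refine induce_connected_of_dominating (B := spine ×ˢ {l}) ?_
    (gridGraph_induce_column_connected spine_nonempty l) fun v hv hv_spine => ?_
  · rintro ⟨r, _⟩ ⟨hr, rfl⟩
    exact hr
  · refine ⟨(v.1, l), ⟨mem_spine (v := v) hv, rfl⟩, gridGraph_adj_iff.mpr (Or.inl ⟨rfl, ?_⟩)⟩
    have v_notMem_column : combLabel n S v.1 v.2 ≠ v.2 := fun h =>
      hv_spine ⟨mem_spine (v := v) hv, (Fin.ext h).symm.trans hv⟩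
    obtain rfl := hv
    exact (combLabel_eq_or_adjacent.resolve_left v_notMem_column).symm

lemma isGridPartition_fiberFamily_combLabelling (n : ℕ) (S : Finset (ℕ × ℕ)) :
    IsGridPartition n (fiberFamily (combLabelling n S)) := by
  refine ⟨?_, ?_, ?_, existsUnique_mem_fiberFamily _⟩
  · simpa using card_fiberFamily (combLabelling_surjective S)
  · intro s hs
    obtain ⟨l, rfl⟩ := mem_fiberFamily.mp hs
    exact card_combLabelling_fiber S l
  · intro s hs
    obtain ⟨l, rfl⟩ := mem_fiberFamily.mp hs
    rw [Finset.coe_filter_univ]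
    exact combLabelling_fiber_connected S l

lemma combLabel_left_eq_iff_mem {i j : ℕ} (hi : i < n / 3) (hj : j < n / 3) :
    combLabel n S (2 * i) (3 * j) = combLabel n S (2 * i) (3 * j + 1) ↔ (i, j) ∈ S := by
  have hcol : (3 * j + 1) / 3 = j := by omega
  have hrow : 2 * i / 2 = i := by omega
  unfold combLabel
  rw [hcol, hrow]
  split_ifs <;> grind

lemma injOn_fiberFamily_combLabelling (n : ℕ) :
    Set.InjOn (fun S => fiberFamily (combLabelling n S))
      (Finset.range (n / 3) ×ˢ Finset.range (n / 3)).powerset := by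
  intro S hS T hT h
  rw [Finset.mem_coe, Finset.mem_powerset] at hS hT
  have mem_iff (i j : ℕ) (hi : i < n / 3) (hj : j < n / 3) : (i, j) ∈ S ↔ (i, j) ∈ T := by
    let tooth : Fin n × Fin n := (⟨2 * i, by omega⟩, ⟨3 * j + 1, by omega⟩)
    let left : Fin n × Fin n := (⟨2 * i, by omega⟩, ⟨3 * j, by omega⟩)
    have same_part_iff (U : Finset (ℕ × ℕ)) :
        (∃ s ∈ fiberFamily (combLabelling n U), left ∈ s ∧ tooth ∈ s) ↔ (i, j) ∈ U := by
      rw [exists_mem_fiberFamily_iff, ← combLabel_left_eq_iff_mem hi hj]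
      exact Fin.ext_iff
    rw [← same_part_iff S, ← same_part_iff T]
    exact iff_of_eq (congrArg (fun P => ∃ s ∈ P, left ∈ s ∧ tooth ∈ s) h)
  ext ⟨i, j⟩
  by_cases hij : (i, j) ∈ Finset.range (n / 3) ×ˢ Finset.range (n / 3)
  · simp only [Finset.mem_product, Finset.mem_range] at hij
    exact mem_iff i j hij.1 hij.2
  · exact iff_of_false (fun h => hij (hS h)) (fun h => hij (hT h))

theorem two_pow_le_gridPartitionCount (n : ℕ) : 2 ^ (n / 3) ^ 2 ≤ gridPartitionCount n := by
  let codes := (Finset.range (n / 3) ×ˢ Finset.range (n / 3)).powerset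
  let combPartition (S : codes) : {P // IsGridPartition n P} :=
    ⟨_, isGridPartition_fiberFamily_combLabelling n S⟩
  have combPartition_injective : combPartition.Injective := fun S T h =>
    Subtype.ext (injOn_fiberFamily_combLabelling n S.2 T.2 (congrArg Subtype.val h))
  calc 2 ^ (n / 3) ^ 2 = Nat.card codes := by
        rw [Nat.card_eq_fintype_card, Fintype.card_coe]
        simp [codes, sq]
    _ ≤ gridPartitionCount n := Nat.card_le_card_of_injective _ combPartition_injective

end Grid

section CompactPartitions

/-- The number `|𝒞ₙ(ε)|` of partitions in `𝒫ₙ` with cut score at most `ε * n ^ 2`. -/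
noncomputable def compactPartitionCount (n : ℕ) (ε : ℝ) : ℕ :=
  Nat.card {P : Finset (Finset (Fin n × Fin n)) //
    IsGridPartition n P ∧ (cutScore n P : ℝ) ≤ ε * (n : ℝ) ^ 2}

lemma compactPartitionCount_mul_pow_le (n : ℕ) {ε x : ℝ} (hx₀ : 0 ≤ x)
    (hx₁ : x ≤ 1) :
    compactPartitionCount n ε * x ^ ⌊ε * (n : ℝ) ^ 2⌋₊ ≤ (1 + x) ^ (2 * n ^ 2) := by
  have count_le : compactPartitionCount n ε ≤ Nat.card {P //
      IsConnectedPartition (gridGraph n) P ∧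
        (cutEdges (gridGraph n) P).ncard ≤ ⌊ε * (n : ℝ) ^ 2⌋₊} :=
    Nat.card_mono (Set.toFinite _) fun P hP =>
      ⟨hP.1.isConnectedPartition, Nat.le_floor hP.2⟩
  calc _ ≤ _ := by gcongr
    _ ≤ (1 + x) ^ (gridGraph n).edgeSet.ncard :=
        card_connectedPartition_mul_pow_le (gridGraph n) _ hx₀ hx₁
    _ ≤ (1 + x) ^ (2 * n ^ 2) := by
        gcongr
        · linarith
        · exact ncard_edgeSet_gridGraph_le n

/-- As `n ≤ 5 * (n / 3)`, there are at most `50 * (n / 3) ^ 2` edges, and a cut score counted here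
is at most `(n / 3) ^ 2 / 26`. The other constants are chosen such that `100 ≤ (6 / 5) ^ 26` and
`(1 + 1 / 100) ^ 50 * (6 / 5) ≤ 99 / 50 < 2`. -/
lemma compactPartitionCount_le {n : ℕ} (hn : 3 ≤ n) :
    (compactPartitionCount n (1 / 650) : ℝ) ≤ (99 / 50) ^ (n / 3) ^ 2 := by
  set m := n / 3
  set k := ⌊1 / 650 * (n : ℝ) ^ 2⌋₊
  have sq_le : n ^ 2 ≤ 25 * m ^ 2 := by
    calc n ^ 2 ≤ (5 * m) ^ 2 := Nat.pow_le_pow_left (by omega) 2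
      _ = 25 * m ^ 2 := by ring
  have hkm : 26 * k ≤ m ^ 2 := by
    have floor_le : (k : ℝ) ≤ 1 / 650 * (n : ℝ) ^ 2 := Nat.floor_le (by positivity)
    have sq_le' : (n : ℝ) ^ 2 ≤ 25 * (m : ℝ) ^ 2 := mod_cast sq_le
    have : (26 * k : ℝ) ≤ (m : ℝ) ^ 2 := by linarith
    exact_mod_cast this
  calc (compactPartitionCount n (1 / 650) : ℝ)
    _ = compactPartitionCount n (1 / 650) * (1 / 100) ^ k * 100 ^ k := by
        rw [mul_assoc, ← mul_pow]
        norm_num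
    _ ≤ (1 + 1 / 100) ^ (2 * n ^ 2) * 100 ^ k := by
        gcongr
        exact compactPartitionCount_mul_pow_le n (by norm_num) (by norm_num)
    _ ≤ (1 + 1 / 100) ^ (50 * m ^ 2) * ((6 / 5) ^ 26) ^ k := by
        have edges_le : 2 * n ^ 2 ≤ 50 * m ^ 2 := by linarith
        have base_le : (100 : ℝ) ≤ (6 / 5) ^ 26 := by norm_num
        gcongr
        norm_num
    _ ≤ ((1 + 1 / 100) ^ 50) ^ m ^ 2 * (6 / 5) ^ m ^ 2 := by
        rw [← pow_mul, ← pow_mul]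
        gcongr
        norm_num
    _ = ((1 + 1 / 100) ^ 50 * (6 / 5)) ^ m ^ 2 := (mul_pow _ _ _).symm
    _ ≤ (99 / 50) ^ m ^ 2 := by
        gcongr
        norm_num

theorem compactPartitionCount_div_gridPartitionCount_le {n : ℕ} (hn : 3 ≤ n) :
    (compactPartitionCount n (1 / 650) : ℝ) / gridPartitionCount n ≤ (99 / 100) ^ (n / 3) ^ 2 := by
  calc (compactPartitionCount n (1 / 650) : ℝ) / gridPartitionCount n
    _ ≤ (99 / 50) ^ (n / 3) ^ 2 / 2 ^ (n / 3) ^ 2 := by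
        gcongr
        · exact compactPartitionCount_le hn
        · exact mod_cast two_pow_le_gridPartitionCount n
    _ = (99 / 100) ^ (n / 3) ^ 2 := by
        rw [← div_pow]
        norm_num

end CompactPartitions

theorem exists_eps_most_plans_not_compact :
    ∃ ε : ℝ, 0 < ε ∧
      Tendsto (fun n : ℕ =>
        (Nat.card {P : Finset (Finset (Fin n × Fin n)) //
            IsGridPartition n P ∧ (cutScore n P : ℝ) ≤ ε * (n : ℝ) ^ 2} : ℝ) /
          (gridPartitionCount n : ℝ)) atTop (nhds 0) := by
  refine ⟨1 / 650, by norm_num, ?_⟩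
  have exponent_tendsto : Tendsto (fun n : ℕ => (n / 3) ^ 2) atTop atTop :=
    (tendsto_pow_atTop two_ne_zero).comp (Nat.tendsto_div_const_atTop three_ne_zero)
  have bound_tendsto : Tendsto (fun n : ℕ => (99 / 100 : ℝ) ^ (n / 3) ^ 2) atTop (nhds 0) :=
    (tendsto_pow_atTop_nhds_zero_of_lt_one (by norm_num) (by norm_num)).comp exponent_tendsto
  refine squeeze_zero' (Eventually.of_forall fun n => by positivity) ?_ bound_tendsto
  filter_upwards [eventually_ge_atTop 3] with n hn
  exact compactPartitionCount_div_gridPartitionCount_le hn
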